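/- Let (Ω, 𝓕, 𝔽 = (𝓕_t)_{t≥0}, P) be a filtered probability space satisfying the usual conditions. Let λ be a nonnegative 𝔽-progressively measurable process with Λ_t := ∫_0^t λ_s ds finite for all t ≥ 0 and Λ_∞ = ∞, P-a.s.; let E ~ Exp(1) be independent of 𝓕_∞, and τ := inf{t > 0 : Λ_t ≥ E}. Suppose in addition that J is an integrable real random variable with P(J ≠ 0) = 1 which is independent of 𝓕_∞ ∨ σ(E). Let 𝔄̃ = (𝓐̃_t)_{t≥0} with 𝓐̃_t := σ(J·1_{{τ ≤ s}} : s ≤ t), and let 𝔾̃ be the right-continuous regularization of (𝓕_t ∨ 𝓐̃_t)_{t≥0}. Then: (a) the process (J·1_{{τ ≤ t}} − E[J]·Λ_{τ∧t})_{t≥0} is a 𝔾̃-martingale, and (b) 𝔽 is immersed in 𝔾̃. -/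

import Mathlib

open MeasureTheory ProbabilityTheory Filter Set
open scoped ENNReal Topology

noncomputable section

namespace InvMarkovJump

variable {Ω : Type*}

/-- `F` is a filtration (for times `t ≥ 0`) of sub-σ-algebras of `m0`. -/
def IsFiltration (m0 : MeasurableSpace Ω) (F : ℝ → MeasurableSpace Ω) : Prop :=
  (∀ s t : ℝ, 0 ≤ s → s ≤ t → F s ≤ F t) ∧ ∀ t : ℝ, F t ≤ m0

/-- The right-continuous regularization `(⋂_{s > t} F s)_{t ≥ 0}` of a filtration. -/
def rcReg (F : ℝ → MeasurableSpace Ω) : ℝ → MeasurableSpace Ω :=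
  fun t => ⨅ s ∈ Set.Ioi t, F s

/-- All sample paths of `M` are right-continuous (at every time `t ≥ 0`). -/
def RCPaths (M : ℝ → Ω → ℝ) : Prop :=
  ∀ ω, ∀ t : ℝ, 0 ≤ t → ContinuousWithinAt (fun s => M s ω) (Set.Ici t) t

/-- `M` is a martingale (for times `t ≥ 0`) with respect to the filtration `F`
under the measure `μ`: it is adapted, integrable, and `E[M_t | F_s] = M_s` a.s.
for all `0 ≤ s ≤ t`. -/
def IsMartingale {m0 : MeasurableSpace Ω} (μ : Measure Ω)
    (F : ℝ → MeasurableSpace Ω) (M : ℝ → Ω → ℝ) : Prop :=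
  (∀ t : ℝ, 0 ≤ t → Integrable (M t) μ) ∧
  (∀ t : ℝ, 0 ≤ t → Measurable[F t] (M t)) ∧
  ∀ s t : ℝ, 0 ≤ s → s ≤ t → μ[M t|F s] =ᵐ[μ] M s

/-- `F` is immersed in `G`: `F ⊆ G` and every `F`-martingale (with right-continuous
sample paths) is a `G`-martingale. -/
def Immersed {m0 : MeasurableSpace Ω} (μ : Measure Ω)
    (F G : ℝ → MeasurableSpace Ω) : Prop :=
  (∀ t : ℝ, 0 ≤ t → F t ≤ G t) ∧
  ∀ M : ℝ → Ω → ℝ, RCPaths M → IsMartingale μ F M → IsMartingale μ G M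

/-- The usual conditions: the filtration is right-continuous and `F 0` contains
all `μ`-null sets. -/
def UsualConditions {m0 : MeasurableSpace Ω} (μ : Measure Ω)
    (F : ℝ → MeasurableSpace Ω) : Prop :=
  IsFiltration m0 F ∧ (∀ t : ℝ, 0 ≤ t → F t = rcReg F t) ∧
    ∀ s : Set Ω, μ s = 0 → MeasurableSet[F 0] s

/-- `E` is `Exp(1)`-distributed: `P(E > x) = e^{-x}` for all `x ≥ 0`. -/
def IsExpOne {m0 : MeasurableSpace Ω} (μ : Measure Ω) (E : Ω → ℝ) : Prop :=
  Measurable E ∧ ∀ x : ℝ, 0 ≤ x → μ {ω | x < E ω} = ENNReal.ofReal (Real.exp (-x))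

/-- `F_∞ = ⋁_{t ≥ 0} F t`. -/
def Finfty (F : ℝ → MeasurableSpace Ω) : MeasurableSpace Ω :=
  ⨆ t ∈ Set.Ici (0:ℝ), F t

/-- The natural filtration `(σ(Y_s : 0 ≤ s ≤ t))_{t ≥ 0}` of a process `Y`. -/
def natFilt {β : Type*} [MeasurableSpace β] (Y : ℝ → Ω → β) : ℝ → MeasurableSpace Ω :=
  fun t => ⨆ s ∈ Set.Icc (0:ℝ) t, MeasurableSpace.comap (Y s) inferInstance

/-- Progressive measurability of a process `u` with respect to the filtration `F`:
for every `t ≥ 0`, `(s, ω) ↦ u s ω` on `[0, t] × Ω` is `B([0,t]) ⊗ F t`-measurable. -/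
def ProgMeas (F : ℝ → MeasurableSpace Ω) (u : ℝ → Ω → ℝ) : Prop :=
  ∀ t : ℝ, 0 ≤ t →
    Measurable[MeasurableSpace.prod inferInstance (F t)]
      (fun p : Set.Icc (0:ℝ) t × Ω => u p.1 p.2)

/-!
Freezing `z = Λ_t` given `𝓕_∞`, the identity `P(E ≤ z) = E[min(E, z)]` for the exponential law and
`Λ_{τ ∧ t} = min(E, Λ_t)` show that the compensated jump has vanishing integral over every set of
`𝓕_∞`. Adding the natural filtration of the jump process does not change the trace of `𝓕_s` on
`{s < τ}`, while increments after `s` vanish on `{τ ≤ s}`; hence the integral of such an increment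
also vanishes over every set of the enlarged σ-algebra.

For the immersion, the enlarged σ-algebra lies in `𝓕_s ∨ σ(E) ∨ σ(J)`, and adjoining to `𝓕_s` a
σ-algebra that is independent of `𝓕_∞` does not change conditional expectations of
`𝓕_∞`-measurable variables.

Right-continuous paths and the uniform integrability of `{E[X | 𝓕_u]}_u` carry both martingale
properties over to the right-continuous regularization.
-/

section NullSets

variable {m0 : MeasurableSpace Ω} {μ : Measure Ω}

/-- Every `μ`-null set is measurable for the sub-σ-algebra `m`; this is the completeness part of
the usual conditions. -/
def ContainsNullSets (μ : Measure Ω) (m : MeasurableSpace Ω) : Prop :=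
  ∀ s : Set Ω, μ s = 0 → MeasurableSet[m] s

lemma ContainsNullSets.mono {m m' : MeasurableSpace Ω} (hm : ContainsNullSets μ m)
    (hle : m ≤ m') : ContainsNullSets μ m' :=
  fun s hs => hle s (hm s hs)

lemma ContainsNullSets.measurableSet_of_ae_eq {m : MeasurableSpace Ω} (hm : ContainsNullSets μ m)
    {s t : Set Ω} (ht : MeasurableSet[m] t) (hst : s =ᵐ[μ] t) : MeasurableSet[m] s := by
  obtain ⟨hs_t, ht_s⟩ := ae_eq_set.1 hst
  have hs : s = t \ (t \ s) ∪ s \ t := by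
    rw [sdiff_sdiff_right_self]
    exact (inter_comm t s ▸ inter_union_sdiff s t).symm
  rw [hs]
  exact (ht.diff (hm _ ht_s)).union (hm _ hs_t)

lemma ContainsNullSets.measurable_of_ae_eq {m : MeasurableSpace Ω} (hm : ContainsNullSets μ m)
    {β : Type*} [MeasurableSpace β] {f g : Ω → β} (hg : Measurable[m] g) (hfg : f =ᵐ[μ] g) :
    Measurable[m] f :=
  fun _ hS => hm.measurableSet_of_ae_eq (hg hS) (hfg.preimage _)

end NullSets

section Independence

variable {V : Type*} [NormedAddCommGroup V] [NormedSpace ℝ V] {m0 : MeasurableSpace Ω}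
  {μ : Measure Ω}

lemma integral_comp_prodMk_of_indepFun [IsFiniteMeasure μ] {α β : Type*} [MeasurableSpace α]
    [MeasurableSpace β] {X : Ω → α} {Y : Ω → β} (hX : Measurable X) (hY : Measurable Y)
    (hXY : IndepFun X Y μ) {f : α × β → V} (hf : StronglyMeasurable f)
    (hint : Integrable (fun ω => f (X ω, Y ω)) μ) :
    ∫ ω, f (X ω, Y ω) ∂μ = ∫ ω', ∫ ω, f (X ω, Y ω') ∂μ ∂μ := by
  have hlaw := (indepFun_iff_map_prod_eq_prod_map_map hX.aemeasurable hY.aemeasurable).1 hXY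
  have hXYm : Measurable fun ω => (X ω, Y ω) := hX.prodMk hY
  have hfprod : Integrable f ((μ.map X).prod (μ.map Y)) := by
    rw [← hlaw]
    exact (integrable_map_measure hf.aestronglyMeasurable hXYm.aemeasurable).2 hint
  have hinner : ∀ y, ∫ x, f (x, y) ∂μ.map X = ∫ ω, f (X ω, y) ∂μ := fun y =>
    integral_map hX.aemeasurable (hf.comp_measurable measurable_prodMk_right).aestronglyMeasurable
  rw [← integral_map hXYm.aemeasurable hf.aestronglyMeasurable, hlaw, integral_prod_symm _ hfprod,
    integral_map hY.aemeasurable hf.integral_prod_left'.aestronglyMeasurable]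
  simp only [hinner]

lemma sup_eq_comap_diag (m₁ m₂ : MeasurableSpace Ω) :
    m₁ ⊔ m₂ = MeasurableSpace.comap (fun ω => (ω, ω)) (m₁.prod m₂) := by
  simp only [MeasurableSpace.prod, MeasurableSpace.comap_sup, MeasurableSpace.comap_comp,
    Function.comp_def]
  exact congrArg₂ _ MeasurableSpace.comap_id.symm MeasurableSpace.comap_id.symm

-- A set in `m ⊔ m₂` is a diagonal section `{ω | (ω, ω) ∈ T}`; by independence the two coordinates
-- may be integrated separately, and every section of `T` at a fixed second coordinate is in `m`.
lemma setIntegral_sup_eq_zero_of_indep [IsFiniteMeasure μ] {m m₁ m₂ : MeasurableSpace Ω}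
    (hm : m ≤ m₁) (hm₁ : m₁ ≤ m0) (hm₂ : m₂ ≤ m0) (hind : Indep m₁ m₂ μ) {f : Ω → V}
    (hf : StronglyMeasurable[m₁] f) (hfint : Integrable f μ)
    (hzero : ∀ s, MeasurableSet[m] s → ∫ ω in s, f ω ∂μ = 0) {s : Set Ω}
    (hs : MeasurableSet[m ⊔ m₂] s) : ∫ ω in s, f ω ∂μ = 0 := by
  obtain ⟨T, hT, rfl⟩ := (sup_eq_comap_diag m m₂).le s hs
  have hsection : ∀ y, MeasurableSet[m] {x | (x, y) ∈ T} := fun y =>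
    (@measurable_prodMk_right Ω Ω m m₂ y) hT
  have hT₁ : MeasurableSet[m₁.prod m₂] T :=
    sup_le_sup_right (MeasurableSpace.comap_mono hm) _ T hT
  have hdiag : MeasurableSet[m0] {ω | (ω, ω) ∈ T} :=
    sup_le (hm.trans hm₁) hm₂ _ hs
  have hfub := @integral_comp_prodMk_of_indepFun Ω V _ _ m0 μ _ Ω Ω m₁ m₂ id id
    (measurable_id'' hm₁) (measurable_id'' hm₂)
    (by simpa only [IndepFun_iff_Indep, MeasurableSpace.comap_id] using hind)
    (T.indicator fun p => f p.1)
    ((hf.comp_measurable (@measurable_fst Ω Ω m₁ m₂)).indicator hT₁)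
    (hfint.indicator hdiag)
  calc ∫ ω in {ω | (ω, ω) ∈ T}, f ω ∂μ
      = ∫ ω, T.indicator (fun p => f p.1) (ω, ω) ∂μ := (integral_indicator hdiag).symm
    _ = ∫ y, ∫ x, T.indicator (fun p => f p.1) (x, y) ∂μ ∂μ := hfub
    _ = ∫ y, ∫ x in {x | (x, y) ∈ T}, f x ∂μ ∂μ := by
        congr 1 with y
        exact integral_indicator (hm₁ _ (hm _ (hsection y)))
    _ = 0 := by simp only [hzero _ (hsection _), integral_zero]

lemma condExp_sup_ae_eq_of_indep [CompleteSpace V] [IsFiniteMeasure μ]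
    {m m₁ m₂ : MeasurableSpace Ω} (hm : m ≤ m₁) (hm₁ : m₁ ≤ m0) (hm₂ : m₂ ≤ m0)
    (hind : Indep m₁ m₂ μ) {f : Ω → V} (hf : StronglyMeasurable[m₁] f) (hfint : Integrable f μ) :
    μ[f|m ⊔ m₂] =ᵐ[μ] μ[f|m] := by
  have hsub : ∀ s, ∫ ω in s, (f - μ[f|m]) ω ∂μ = ∫ ω in s, f ω ∂μ - ∫ ω in s, (μ[f|m]) ω ∂μ :=
    fun s => integral_sub hfint.integrableOn integrable_condExp.integrableOn
  have hzero : ∀ s, MeasurableSet[m] s → ∫ ω in s, (f - μ[f|m]) ω ∂μ = 0 := fun s hs => by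
    rw [hsub, setIntegral_condExp (hm.trans hm₁) hfint hs, sub_self]
  refine (ae_eq_condExp_of_forall_setIntegral_eq (sup_le (hm.trans hm₁) hm₂) hfint
    (fun _ _ _ => integrable_condExp.integrableOn) (fun s hs _ => ?_)
    (stronglyMeasurable_condExp.mono le_sup_left).aestronglyMeasurable).symm
  rw [eq_comm, ← sub_eq_zero, ← hsub]
  exact setIntegral_sup_eq_zero_of_indep hm hm₁ hm₂ hind
    (hf.sub (stronglyMeasurable_condExp.mono hm)) (hfint.sub integrable_condExp) hzero hs

end Independence

section Trace

variable {m0 : MeasurableSpace Ω} {μ : Measure Ω}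

lemma comap_val_sup_natFilt_eq {β : Type*} [MeasurableSpace β] (m : MeasurableSpace Ω)
    {Y : ℝ → Ω → β} {t : ℝ} {D : Set Ω} {y : ℝ → β} (hY : ∀ s ∈ Icc 0 t, ∀ ω ∈ D, Y s ω = y s) :
    MeasurableSpace.comap ((↑) : D → Ω) (m ⊔ natFilt Y t) =
      MeasurableSpace.comap ((↑) : D → Ω) m := by
  have hconst : ∀ s ∈ Icc 0 t, Y s ∘ ((↑) : D → Ω) = fun _ => y s :=
    fun s hs => funext fun ω => hY s hs ω ω.2
  simp only [natFilt, MeasurableSpace.comap_sup, MeasurableSpace.comap_iSup,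
    MeasurableSpace.comap_comp, sup_eq_left, iSup₂_le_iff]
  intro s hs
  rw [hconst s hs, MeasurableSpace.comap_const]
  exact bot_le

lemma setIntegral_eq_zero_of_comap_val_le {V : Type*} [NormedAddCommGroup V] [NormedSpace ℝ V]
    {m m' : MeasurableSpace Ω} (hm : m ≤ m0) (hm' : m' ≤ m0) {D : Set Ω}
    (htrace : MeasurableSpace.comap ((↑) : D → Ω) m' ≤ MeasurableSpace.comap ((↑) : D → Ω) m)
    {f : Ω → V} (hfD : ∀ ω ∉ D, f ω = 0)
    (hzero : ∀ s, MeasurableSet[m] s → ∫ ω in s, f ω ∂μ = 0) {s : Set Ω}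
    (hs : MeasurableSet[m'] s) : ∫ ω in s, f ω ∂μ = 0 := by
  obtain ⟨t, ht, hts⟩ := htrace _ ⟨s, hs, rfl⟩
  rw [Subtype.preimage_coe_eq_preimage_coe_iff] at hts
  rw [← hzero t ht, ← integral_indicator (hm' s hs), ← integral_indicator (hm t ht)]
  congr 1 with ω
  by_cases hω : ω ∈ D
  · have hmem : ω ∈ s ↔ ω ∈ t := by simpa [hω] using (Set.ext_iff.1 hts ω).symm
    exact indicator_eq_indicator hmem rfl
  · simp only [indicator, hfD ω hω, ite_self]

end Trace

section Exponential

variable {m m0 : MeasurableSpace Ω} {μ : Measure Ω} {E : Ω → ℝ}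

lemma IsExpOne.measureReal_lt (hE : IsExpOne μ E) {x : ℝ} (hx : 0 ≤ x) :
    μ.real {ω | x < E ω} = Real.exp (-x) := by
  rw [measureReal_def, hE.2 x hx, ENNReal.toReal_ofReal (Real.exp_nonneg _)]

variable [IsProbabilityMeasure μ]

lemma IsExpOne.ae_pos (hE : IsExpOne μ E) : ∀ᵐ ω ∂μ, 0 < E ω := by
  refine (mem_ae_iff_prob_eq_one (measurableSet_lt measurable_const hE.1)).2 ?_
  simpa using hE.2 0 le_rfl

lemma IsExpOne.integrable (hE : IsExpOne μ E) : Integrable E μ := by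
  have hnonneg : 0 ≤ᵐ[μ] E := hE.ae_pos.mono fun _ h => h.le
  refine ⟨hE.1.aestronglyMeasurable, ?_⟩
  rw [hasFiniteIntegral_iff_ofReal hnonneg,
    lintegral_eq_lintegral_meas_lt μ hnonneg hE.1.aemeasurable,
    setLIntegral_congr_fun measurableSet_Ioi fun x hx => hE.2 x (le_of_lt hx)]
  exact (integrableOn_exp_neg_Ioi 0).lintegral_lt_top

lemma IsExpOne.measureReal_le (hE : IsExpOne μ E) {x : ℝ} (hx : 0 ≤ x) :
    μ.real {ω | E ω ≤ x} = 1 - Real.exp (-x) := by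
  rw [← hE.measureReal_lt hx, ← probReal_compl_eq_one_sub (measurableSet_lt measurable_const hE.1)]
  simp only [compl_ofPred, not_lt]

lemma IsExpOne.integrable_min (hE : IsExpOne μ E) {Z : Ω → ℝ} (hZ : Measurable Z)
    (hZ0 : ∀ ω, 0 ≤ Z ω) : Integrable (fun ω => min (E ω) (Z ω)) μ := by
  refine hE.integrable.mono (hE.1.min hZ).aestronglyMeasurable ?_
  filter_upwards [hE.ae_pos] with ω hω
  rw [Real.norm_of_nonneg (le_min hω.le (hZ0 ω)), Real.norm_of_nonneg hω.le]
  exact min_le_left _ _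

lemma IsExpOne.integral_min (hE : IsExpOne μ E) {x : ℝ} (hx : 0 ≤ x) :
    ∫ ω, min (E ω) x ∂μ = 1 - Real.exp (-x) := by
  have hnonneg : 0 ≤ᵐ[μ] fun ω => min (E ω) x := hE.ae_pos.mono fun ω h => le_min h.le hx
  have htail : ∀ t ∈ Ioi (0 : ℝ),
      μ.real {ω | t < min (E ω) x} = (Iio x).indicator (fun t => Real.exp (-t)) t := by
    intro t ht
    by_cases htx : t < x
    · simp [htx, hE.measureReal_lt (le_of_lt ht)]
    · simp [htx]
  calc ∫ ω, min (E ω) x ∂μ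
      = ∫ t in Ioi 0, μ.real {ω | t < min (E ω) x} :=
        (hE.integrable_min measurable_const fun _ => hx).integral_eq_integral_meas_lt hnonneg
    _ = ∫ t in Ioi 0, (Iio x).indicator (fun t => Real.exp (-t)) t :=
        setIntegral_congr_fun measurableSet_Ioi htail
    _ = ∫ t in (0)..x, Real.exp (-t) := by
        rw [setIntegral_indicator measurableSet_Iio, Ioi_inter_Iio, ← integral_Ioc_eq_integral_Ioo,
          intervalIntegral.integral_of_le hx]
    _ = 1 - Real.exp (-x) := by
        rw [intervalIntegral.integral_comp_neg, integral_exp, neg_zero, Real.exp_zero]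

lemma IsExpOne.integral_compensated_eq_zero (hE : IsExpOne μ E) {x : ℝ} (hx : 0 ≤ x) :
    ∫ ω, ({ω | E ω ≤ x}.indicator 1 ω - min (E ω) x) ∂μ = 0 := by
  have hset : MeasurableSet {ω | E ω ≤ x} := measurableSet_le hE.1 measurable_const
  have hjump_int : Integrable ({ω | E ω ≤ x}.indicator (1 : Ω → ℝ)) μ :=
    (integrable_const (1 : ℝ)).indicator hset
  rw [integral_sub hjump_int (hE.integrable_min measurable_const fun _ => hx),
    integral_indicator_one hset, hE.measureReal_le hx, hE.integral_min hx, sub_self]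

lemma IsExpOne.measureReal_inter_le_eq_setIntegral_min (hE : IsExpOne μ E) {α : Type*}
    [MeasurableSpace α] {X : Ω → α} (hX : Measurable X) (hind : IndepFun E X μ) {z : α → ℝ}
    (hz : Measurable z) (hz0 : ∀ x, 0 ≤ z x) {B : Set α} (hB : MeasurableSet B) :
    μ.real (X ⁻¹' B ∩ {ω | E ω ≤ z (X ω)}) = ∫ ω in X ⁻¹' B, min (E ω) (z (X ω)) ∂μ := by
  have hset : MeasurableSet {ω | E ω ≤ z (X ω)} := measurableSet_le hE.1 (hz.comp hX)
  have hjump_int : Integrable ({ω | E ω ≤ z (X ω)}.indicator (1 : Ω → ℝ)) μ :=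
    (integrable_const (1 : ℝ)).indicator hset
  have hmin_int : Integrable (fun ω => min (E ω) (z (X ω))) μ :=
    hE.integrable_min (hz.comp hX) fun ω => hz0 (X ω)
  let f : ℝ × α → ℝ := (Prod.snd ⁻¹' B).indicator fun p =>
    {p : ℝ × α | p.1 ≤ z p.2}.indicator 1 p - min p.1 (z p.2)
  have hzsnd : Measurable fun p : ℝ × α => z p.2 := hz.comp measurable_snd
  have hf : Measurable f :=
    ((measurable_one.indicator (measurableSet_le measurable_fst hzsnd)).sub
      (measurable_fst.min hzsnd)).indicator (measurable_snd hB)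
  have hinner : ∀ x, ∫ ω, f (E ω, x) ∂μ = 0 := by
    intro x
    by_cases hx : x ∈ B
    · simpa [f, hx, indicator] using hE.integral_compensated_eq_zero (hz0 x)
    · simp [f, hx]
  have hcompensated : ∫ ω in X ⁻¹' B, ({ω | E ω ≤ z (X ω)}.indicator (1 : Ω → ℝ) ω
      - min (E ω) (z (X ω))) ∂μ = 0 := by
    rw [← integral_indicator (hX hB)]
    refine (integral_comp_prodMk_of_indepFun hE.1 hX hind hf.stronglyMeasurable
      ((hjump_int.sub hmin_int).indicator (hX hB))).trans ?_
    simp only [hinner, integral_zero]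
  rw [integral_sub hjump_int.integrableOn hmin_int.integrableOn, sub_eq_zero,
    integral_indicator_one hset, measureReal_restrict_apply hset] at hcompensated
  rw [inter_comm, hcompensated]

lemma IsExpOne.setIntegral_compensated_mark_eq_zero (hE : IsExpOne μ E) (hm : m ≤ m0)
    (hind : Indep (MeasurableSpace.comap E inferInstance) m μ) {J : Ω → ℝ} (hJ : Measurable J)
    (hJint : Integrable J μ)
    (hJind : Indep (MeasurableSpace.comap J inferInstance)
      (m ⊔ MeasurableSpace.comap E inferInstance) μ)
    {Z : Ω → ℝ} (hZ : Measurable[m] Z) (hZ0 : ∀ ω, 0 ≤ Z ω) {B : Set Ω} (hB : MeasurableSet[m] B) :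
    ∫ ω in B, ({ω | E ω ≤ Z ω}.indicator J ω - (∫ x, J x ∂μ) * min (E ω) (Z ω)) ∂μ = 0 := by
  have hZm : Measurable Z := hZ.mono hm le_rfl
  have hset : MeasurableSet {ω | E ω ≤ Z ω} := measurableSet_le hE.1 hZm
  have hmin : μ.real (B ∩ {ω | E ω ≤ Z ω}) = ∫ ω in B, min (E ω) (Z ω) ∂μ :=
    @IsExpOne.measureReal_inter_le_eq_setIntegral_min Ω m0 μ E _ hE Ω m id (measurable_id'' hm)
      (by simpa only [IndepFun_iff_Indep, MeasurableSpace.comap_id] using hind) Z hZ hZ0 B hB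
  have hBset : MeasurableSet[m ⊔ MeasurableSpace.comap E inferInstance] (B ∩ {ω | E ω ≤ Z ω}) :=
    (le_sup_left (a := m) B hB).inter (measurableSet_le
      ((comap_measurable E).mono le_sup_right le_rfl) (hZ.mono le_sup_left le_rfl))
  have hmark : ∫ ω in B ∩ {ω | E ω ≤ Z ω}, J ω ∂μ =
      μ.real (B ∩ {ω | E ω ≤ Z ω}) * ∫ ω, J ω ∂μ :=
    hJind.symm.setIntegral_eq_mul (f := id) (sup_le hm hE.1.comap_le) hJ.aemeasurable hBset
      aestronglyMeasurable_id
  rw [integral_sub (hJint.indicator hset).integrableOn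
      ((hE.integrable_min hZm hZ0).const_mul _).integrableOn,
    setIntegral_indicator hset, hmark, hmin, integral_const_mul, mul_comm, sub_self]

end Exponential

section Hazard

/-- A hazard path `t ↦ Λ_t(ω)`: it increases continuously from `0` at time `0` to `∞`. -/
structure IsHazardPath (L : ℝ → ℝ) : Prop where
  zero : L 0 = 0
  monotoneOn : MonotoneOn L (Ici 0)
  continuousOn : ContinuousOn L (Ici 0)
  tendsto_atTop : Tendsto L atTop atTop

lemma IsHazardPath.nonneg {L : ℝ → ℝ} (hL : IsHazardPath L) {t : ℝ} (ht : 0 ≤ t) : 0 ≤ L t :=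
  hL.zero.ge.trans (hL.monotoneOn self_mem_Ici ht ht)

/-- `T` is the first time `t ≥ 0` at which the path `L` reaches the level `e`, and the path does
not overshoot. For the path `L = Λ(ω)` and the level `e = E(ω)` this pins down `T = τ(ω)`. -/
structure IsFirstPassage (L : ℝ → ℝ) (e T : ℝ) : Prop where
  nonneg : 0 ≤ T
  apply_eq : L T = e
  le_iff : ∀ t, 0 ≤ t → (T ≤ t ↔ e ≤ L t)

lemma IsFirstPassage.apply_min {L : ℝ → ℝ} {e T : ℝ} (h : IsFirstPassage L e T) {t : ℝ}
    (ht : 0 ≤ t) : L (min T t) = min e (L t) := by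
  rcases le_or_gt T t with hTt | htT
  · rw [min_eq_left hTt, h.apply_eq, min_eq_left ((h.le_iff t ht).1 hTt)]
  · have hlt : L t < e := not_le.1 fun he => htT.not_ge ((h.le_iff t ht).2 he)
    rw [min_eq_right htT.le, min_eq_right hlt.le]

lemma IsHazardPath.isFirstPassage_sInf {L : ℝ → ℝ} (hL : IsHazardPath L) {e : ℝ} (he : 0 < e) :
    IsFirstPassage L e (sInf {t : ℝ | 0 < t ∧ e ≤ L t}) := by
  have hset : {t : ℝ | 0 < t ∧ e ≤ L t} = Ici 0 ∩ L ⁻¹' Ici e := by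
    ext t
    refine ⟨fun ⟨ht, hte⟩ => ⟨ht.le, hte⟩, fun ⟨ht, hte⟩ => ⟨lt_of_le_of_ne ht ?_, hte⟩⟩
    rintro rfl
    exact he.not_ge (hL.zero ▸ hte)
  have hbdd : BddBelow (Ici 0 ∩ L ⁻¹' Ici e) := ⟨0, fun _ ht => ht.1⟩
  have hreach : (Ici 0 ∩ L ⁻¹' Ici e).Nonempty :=
    ((eventually_ge_atTop 0).and (hL.tendsto_atTop.eventually_ge_atTop e)).exists
  rw [hset]
  set T := sInf (Ici 0 ∩ L ⁻¹' Ici e)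
  obtain ⟨hT0, hTe⟩ : T ∈ Ici 0 ∩ L ⁻¹' Ici e :=
    (hL.continuousOn.preimage_isClosed_of_isClosed isClosed_Ici isClosed_Ici).csInf_mem hreach hbdd
  have hle_iff : ∀ t, 0 ≤ t → (T ≤ t ↔ e ≤ L t) := fun t ht =>
    ⟨fun hTt => le_trans hTe (hL.monotoneOn hT0 ht hTt), fun hte => csInf_le hbdd ⟨ht, hte⟩⟩
  obtain ⟨s, ⟨hs0, hsT⟩, hse⟩ : e ∈ L '' Icc 0 T :=
    intermediate_value_Icc hT0 (hL.continuousOn.mono Icc_subset_Ici_self)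
      ⟨hL.zero.trans_le he.le, hTe⟩
  have hTs : T = s := le_antisymm ((hle_iff s hs0).2 hse.ge) hsT
  exact ⟨hT0, hTs ▸ hse, hle_iff⟩

end Hazard

section Intensity

/-- The integrated intensity `Λ_t = ∫_0^t λ_s ds`. -/
def cumulativeIntensity (lam : ℝ → Ω → ℝ) (t : ℝ) (ω : Ω) : ℝ :=
  ∫ s in Ioc 0 t, lam s ω

variable {lam : ℝ → Ω → ℝ}

lemma continuousOn_cumulativeIntensity {ω : Ω}
    (hfin : ∀ t : ℝ, IntegrableOn (fun s => lam s ω) (Ioc 0 t)) :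
    ContinuousOn (cumulativeIntensity lam · ω) (Ici 0) := by
  intro t ht
  have hIcc : IntegrableOn (fun s => lam s ω) (Icc 0 (t + 1)) :=
    (integrableOn_Icc_iff_integrableOn_Ioc (by simp)).2 (hfin _)
  have hlt : t < t + 1 := lt_add_one t
  refine (intervalIntegral.continuousOn_primitive hIcc t ⟨ht, hlt.le⟩).mono_of_mem_nhdsWithin ?_
  rw [← Ici_inter_Iic]
  exact inter_mem_nhdsWithin _ (Iic_mem_nhds hlt)

lemma isHazardPath_cumulativeIntensity {ω : Ω} (hnonneg : ∀ s, 0 ≤ lam s ω)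
    (hfin : ∀ t : ℝ, IntegrableOn (fun s => lam s ω) (Ioc 0 t))
    (hinf : Tendsto (cumulativeIntensity lam · ω) atTop atTop) :
    IsHazardPath (cumulativeIntensity lam · ω) where
  zero := by simp [cumulativeIntensity]
  monotoneOn := fun _ _ b _ hab =>
    setIntegral_mono_set (hfin b) (ae_of_all _ hnonneg) (Ioc_subset_Ioc_right hab).eventuallyLE
  continuousOn := continuousOn_cumulativeIntensity hfin
  tendsto_atTop := hinf

lemma ProgMeas.measurable_cumulativeIntensity {F : ℝ → MeasurableSpace Ω} (hprog : ProgMeas F lam)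
    {t : ℝ} (ht : 0 ≤ t) : Measurable[F t] (cumulativeIntensity lam t) := by
  let := F t
  have hextend : Measurable fun p : ℝ × Ω => lam (projIcc 0 t ht p.1) p.2 :=
    (hprog t ht).comp (((continuous_projIcc (h := ht)).measurable.comp measurable_fst).prodMk
      measurable_snd)
  convert (hextend.stronglyMeasurable.integral_prod_left'
    (μ := volume.restrict (Ioc 0 t))).measurable using 2 with ω
  refine setIntegral_congr_fun measurableSet_Ioc fun s hs => ?_
  simp only [projIcc_of_mem ht (Ioc_subset_Icc_self hs)]

end Intensity

section Martingale

variable {m0 : MeasurableSpace Ω} {μ : Measure Ω} {F H K : ℝ → MeasurableSpace Ω} {M : ℝ → Ω → ℝ}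

lemma IsFiltration.le_rcReg (hF : IsFiltration m0 F) {t : ℝ} (ht : 0 ≤ t) : F t ≤ rcReg F t :=
  le_iInf₂ fun s hs => hF.1 t s ht (le_of_lt hs)

lemma rcReg_le {s t : ℝ} (hst : s < t) : rcReg F s ≤ F t :=
  iInf₂_le t hst

lemma le_Finfty {t : ℝ} (ht : 0 ≤ t) : F t ≤ Finfty F :=
  le_iSup₂_of_le t ht le_rfl

lemma IsFiltration.Finfty_le (hF : IsFiltration m0 F) : Finfty F ≤ m0 :=
  iSup₂_le fun t _ => hF.2 t

lemma IsFiltration.sup_const (hF : IsFiltration m0 F) {B : MeasurableSpace Ω} (hB : B ≤ m0) :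
    IsFiltration m0 (fun t => F t ⊔ B) :=
  ⟨fun s t hs hst => sup_le_sup_right (hF.1 s t hs hst) B, fun t => sup_le (hF.2 t) hB⟩

lemma comap_le_natFilt {β : Type*} [MeasurableSpace β] (Y : ℝ → Ω → β) {s t : ℝ}
    (hs : s ∈ Icc 0 t) : MeasurableSpace.comap (Y s) inferInstance ≤ natFilt Y t :=
  le_iSup₂_of_le (f := fun r (_ : r ∈ Icc 0 t) => MeasurableSpace.comap (Y r) inferInstance)
    s hs le_rfl

lemma IsFiltration.sup_natFilt (hF : IsFiltration m0 F) {β : Type*} [MeasurableSpace β]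
    {Y : ℝ → Ω → β} (hY : ∀ s, 0 ≤ s → Measurable (Y s)) :
    IsFiltration m0 (fun t => F t ⊔ natFilt Y t) := by
  refine ⟨fun s t hs hst => sup_le_sup (hF.1 s t hs hst) ?_, fun t => sup_le (hF.2 t) ?_⟩
  · exact iSup₂_le fun r hr => comap_le_natFilt Y ⟨hr.1, hr.2.trans hst⟩
  · exact iSup₂_le fun r hr => (hY r hr.1).comap_le

lemma isMartingale_of_setIntegral_increment_eq_zero [IsFiniteMeasure μ] (hF : IsFiltration m0 F)
    (hint : ∀ t, 0 ≤ t → Integrable (M t) μ) (hadapted : ∀ t, 0 ≤ t → Measurable[F t] (M t))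
    (hincr : ∀ s t, 0 ≤ s → s ≤ t → ∀ A, MeasurableSet[F s] A →
      ∫ ω in A, (M t ω - M s ω) ∂μ = 0) : IsMartingale μ F M := by
  refine ⟨hint, hadapted, fun s t hs hst => ?_⟩
  have ht : 0 ≤ t := hs.trans hst
  refine (ae_eq_condExp_of_forall_setIntegral_eq (hF.2 s) (hint t ht)
    (fun _ _ _ => (hint s hs).integrableOn) (fun A hA _ => ?_)
    (hadapted s hs).stronglyMeasurable.aestronglyMeasurable).symm
  rw [eq_comm, ← sub_eq_zero, ← integral_sub (hint t ht).integrableOn (hint s hs).integrableOn]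
  exact hincr s t hs hst A hA

lemma IsMartingale.tendsto_eLpNorm_sub [IsFiniteMeasure μ] (hF : IsFiltration m0 F)
    (hM : IsMartingale μ F M) {t : ℝ} {u : ℕ → ℝ} (hu : ∀ n, u n ∈ Icc 0 t) {X : Ω → ℝ}
    (hX : Integrable X μ) (hlim : ∀ᵐ ω ∂μ, Tendsto (fun n => M (u n) ω) atTop (𝓝 (X ω))) :
    Tendsto (fun n => eLpNorm (M (u n) - X) 1 μ) atTop (𝓝 0) := by
  have hunif : UniformIntegrable (fun n => M (u n)) 1 μ :=
    ((hM.1 t ((hu 0).1.trans (hu 0).2)).uniformIntegrable_condExp (ℱ := fun n => F (u n))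
      fun n => hF.2 _).ae_eq fun n => hM.2.2 (u n) t (hu n).1 (hu n).2
  exact tendsto_Lp_finite_of_tendsto_ae le_rfl ENNReal.one_ne_top
    (fun n => (hM.1 _ (hu n).1).aestronglyMeasurable) (memLp_one_iff_integrable.2 hX) hunif.2.1 hlim

lemma IsMartingale.to_rcReg [IsFiniteMeasure μ] (hF : IsFiltration m0 F) (hM : IsMartingale μ F M)
    (hrc : ∀ s, 0 ≤ s → ∀ᵐ ω ∂μ, ContinuousWithinAt (M · ω) (Ioi s) s) :
    IsMartingale μ (rcReg F) M := by
  have hle : ∀ s, rcReg F s ≤ m0 := fun s => (rcReg_le (lt_add_one s)).trans (hF.2 _)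
  have hadapted : ∀ t, 0 ≤ t → Measurable[rcReg F t] (M t) := fun t ht =>
    (hM.2.1 t ht).mono (hF.le_rcReg ht) le_rfl
  refine ⟨hM.1, hadapted, fun s t hs hst => ?_⟩
  rcases hst.eq_or_lt with rfl | hlt
  · rw [condExp_of_stronglyMeasurable (hle s) (hadapted s hs).stronglyMeasurable (hM.1 s hs)]
  obtain ⟨u, -, hu, hus⟩ := exists_seq_strictAnti_tendsto' hlt
  have hu0 : ∀ n, 0 ≤ u n := fun n => hs.trans (hu n).1.le
  have hus_right : Tendsto u atTop (𝓝[>] s) :=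
    tendsto_nhdsWithin_iff.2 ⟨hus, Eventually.of_forall fun n => (hu n).1⟩
  have hL1 : Tendsto (fun n => eLpNorm (M (u n) - M s) 1 μ) atTop (𝓝 0) :=
    hM.tendsto_eLpNorm_sub hF (fun n => ⟨hu0 n, (hu n).2.le⟩) (hM.1 s hs)
      ((hrc s hs).mono fun ω hω => hω.tendsto.comp hus_right)
  refine (ae_eq_condExp_of_forall_setIntegral_eq (hle s) (hM.1 t (hs.trans hst))
    (fun _ _ _ => (hM.1 s hs).integrableOn) (fun A hA _ => ?_)
    (hadapted s hs).stronglyMeasurable.aestronglyMeasurable).symm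
  have hconst : ∀ n, ∫ ω in A, M (u n) ω ∂μ = ∫ ω in A, M t ω ∂μ := fun n => by
    have hAn : MeasurableSet[F (u n)] A := rcReg_le (hu n).1 A hA
    rw [← setIntegral_condExp (hF.2 _) (hM.1 t (hs.trans hst)) hAn]
    exact setIntegral_congr_ae (hF.2 _ _ hAn)
      ((hM.2.2 (u n) t (hu0 n) (hu n).2.le).mono fun ω hω _ => hω.symm)
  have hlim := tendsto_setIntegral_of_L1' (M s) (hM.1 s hs).aestronglyMeasurable
    (Eventually.of_forall fun n => hM.1 (u n) (hu0 n)) hL1 A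
  exact tendsto_nhds_unique hlim (by simp only [hconst, tendsto_const_nhds])

lemma IsMartingale.of_le [IsFiniteMeasure μ] (hK : IsFiltration m0 K) (hM : IsMartingale μ K M)
    (hHK : ∀ t, 0 ≤ t → H t ≤ K t) (hadapted : ∀ t, 0 ≤ t → Measurable[H t] (M t)) :
    IsMartingale μ H M := by
  refine ⟨hM.1, hadapted, fun s t hs hst => ?_⟩
  calc μ[M t|H s]
      =ᵐ[μ] μ[μ[M t|K s]|H s] := (condExp_condExp_of_le (hHK s hs) (hK.2 s)).symm
    _ =ᵐ[μ] μ[M s|H s] := condExp_congr_ae (hM.2.2 s t hs hst)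
    _ = M s := condExp_of_stronglyMeasurable ((hHK s hs).trans (hK.2 s))
        (hadapted s hs).stronglyMeasurable (hM.1 s hs)

lemma IsMartingale.sup_of_indep [IsFiniteMeasure μ] (hF : IsFiltration m0 F)
    (hM : IsMartingale μ F M) {B : MeasurableSpace Ω} (hB : B ≤ m0)
    (hind : Indep (Finfty F) B μ) : IsMartingale μ (fun t => F t ⊔ B) M :=
  ⟨hM.1, fun t ht => (hM.2.1 t ht).mono le_sup_left le_rfl, fun s t hs hst =>
    (condExp_sup_ae_eq_of_indep (le_Finfty hs) hF.Finfty_le hB hind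
      ((hM.2.1 t (hs.trans hst)).mono (le_Finfty (hs.trans hst)) le_rfl).stronglyMeasurable
      (hM.1 t (hs.trans hst))).trans (hM.2.2 s t hs hst)⟩

end Martingale

section JumpProcess

/-- The single-jump process `J·1_{τ ≤ t}`. -/
def jumpProcess (τ J : Ω → ℝ) (t : ℝ) (ω : Ω) : ℝ :=
  if τ ω ≤ t then J ω else 0

variable {m m0 : MeasurableSpace Ω} {μ : Measure Ω} {τ J E : Ω → ℝ} {L : ℝ → Ω → ℝ}

lemma jumpProcess_ae_eq_indicator (hpass : ∀ᵐ ω ∂μ, IsFirstPassage (L · ω) (E ω) (τ ω)) {t : ℝ}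
    (ht : 0 ≤ t) : jumpProcess τ J t =ᵐ[μ] {ω | E ω ≤ L t ω}.indicator J := by
  filter_upwards [hpass] with ω hω
  simp only [jumpProcess, hω.le_iff t ht, indicator_apply, mem_ofPred_eq]

lemma measurable_jumpProcess (hm : ContainsNullSets μ m)
    (hpass : ∀ᵐ ω ∂μ, IsFirstPassage (L · ω) (E ω) (τ ω)) {t : ℝ} (ht : 0 ≤ t)
    (hL : Measurable[m] (L t)) (hE : Measurable[m] E) (hJ : Measurable[m] J) :
    Measurable[m] (jumpProcess τ J t) :=
  hm.measurable_of_ae_eq (hJ.indicator (measurableSet_le hE hL))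
    (jumpProcess_ae_eq_indicator hpass ht)

lemma isFiltration_sup_natFilt_jumpProcess {F : ℝ → MeasurableSpace Ω} (hF : IsFiltration m0 F)
    (hnull : ContainsNullSets μ (F 0)) (hL : ∀ t, 0 ≤ t → Measurable[F t] (L t))
    (hpass : ∀ᵐ ω ∂μ, IsFirstPassage (L · ω) (E ω) (τ ω)) (hE : Measurable E)
    (hJ : Measurable J) : IsFiltration m0 (fun t => F t ⊔ natFilt (jumpProcess τ J) t) :=
  hF.sup_natFilt fun t ht => measurable_jumpProcess (hnull.mono (hF.2 0)) hpass ht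
    ((hL t ht).mono (hF.2 t) le_rfl) hE hJ

lemma sup_natFilt_jumpProcess_le {F : ℝ → MeasurableSpace Ω} (hF : IsFiltration m0 F)
    (hnull : ContainsNullSets μ (F 0)) (hL : ∀ t, 0 ≤ t → Measurable[F t] (L t))
    (hpass : ∀ᵐ ω ∂μ, IsFirstPassage (L · ω) (E ω) (τ ω)) {t : ℝ} (ht : 0 ≤ t) :
    F t ⊔ natFilt (jumpProcess τ J) t ≤
      F t ⊔ MeasurableSpace.comap E inferInstance ⊔ MeasurableSpace.comap J inferInstance := by
  have hFK : F t ≤ F t ⊔ MeasurableSpace.comap E inferInstance ⊔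
      MeasurableSpace.comap J inferInstance := le_sup_left.trans le_sup_left
  refine sup_le hFK (iSup₂_le fun s hs => Measurable.comap_le ?_)
  exact measurable_jumpProcess (hnull.mono ((hF.1 0 t le_rfl ht).trans hFK)) hpass hs.1
    ((hL s hs.1).mono ((hF.1 s t hs.1 hs.2).trans hFK) le_rfl)
    ((comap_measurable E).mono (le_sup_right.trans le_sup_left) le_rfl)
    ((comap_measurable J).mono le_sup_right le_rfl)

lemma measurable_jumpProcess_sup_natFilt {F : ℝ → MeasurableSpace Ω} {s t : ℝ}
    (hs : s ∈ Icc 0 t) : Measurable[F t ⊔ natFilt (jumpProcess τ J) t] (jumpProcess τ J s) :=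
  (comap_measurable _).mono ((comap_le_natFilt _ hs).trans le_sup_right) le_rfl

lemma measurableSet_le_of_measurable_jumpProcess (hm : ContainsNullSets μ m)
    (hJ0 : ∀ᵐ ω ∂μ, J ω ≠ 0) {t : ℝ} (hjump : Measurable[m] (jumpProcess τ J t)) :
    MeasurableSet[m] {ω | τ ω ≤ t} := by
  refine hm.measurableSet_of_ae_eq (hjump (measurableSet_singleton 0).compl) ?_
  filter_upwards [hJ0] with ω hω
  have hmem : ω ∈ {ω | τ ω ≤ t} ↔ ω ∈ jumpProcess τ J t ⁻¹' {0}ᶜ := by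
    simp [jumpProcess, hω]
  exact propext hmem

lemma measurable_min_of_measurableSet_le (hm : ContainsNullSets μ m) (hτ0 : ∀ᵐ ω ∂μ, 0 ≤ τ ω)
    {t : ℝ} (hτ : ∀ s ∈ Icc 0 t, MeasurableSet[m] {ω | τ ω ≤ s}) :
    Measurable[m] (fun ω => min (τ ω) t) := by
  refine @measurable_of_Iic ℝ Ω _ _ _ m _ _ _ _ fun s => ?_
  rcases le_or_gt t s with hts | hst
  · convert @MeasurableSet.univ Ω m using 1
    exact eq_univ_of_forall fun ω => (min_le_right _ _).trans hts
  have hset : (fun ω => min (τ ω) t) ⁻¹' Iic s = {ω | τ ω ≤ s} := by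
    ext ω
    simp [hst.not_ge]
  rw [hset]
  rcases lt_or_ge s 0 with hs | hs
  · exact hm _ (measure_mono_null (fun ω hω => (hω.trans_lt hs).not_ge) (ae_iff.1 hτ0))
  · exact hτ s ⟨hs, hst.le⟩

lemma continuousWithinAt_jumpProcess (τ J : Ω → ℝ) (ω : Ω) (s : ℝ) :
    ContinuousWithinAt (jumpProcess τ J · ω) (Ioi s) s := by
  refine tendsto_const_nhds.congr' ?_
  rcases le_or_gt (τ ω) s with hτs | hsτ
  · filter_upwards [self_mem_nhdsWithin] with t ht
    simp only [jumpProcess, hτs, hτs.trans (le_of_lt ht)]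
  · filter_upwards [mem_nhdsWithin_of_mem_nhds (Iio_mem_nhds hsτ)] with t ht
    simp only [jumpProcess, not_le.2 hsτ, not_le.2 (mem_Iio.1 ht)]

end JumpProcess

section CompensatedJump

/-- The single-jump process minus its compensator, `J·1_{τ ≤ t} − E[J]·Λ_{τ ∧ t}`. -/
def compensatedJump {_ : MeasurableSpace Ω} (μ : Measure Ω) (L : ℝ → Ω → ℝ) (τ J : Ω → ℝ) (t : ℝ)
    (ω : Ω) : ℝ :=
  jumpProcess τ J t ω - (∫ x, J x ∂μ) * L (min (τ ω) t) ω

variable {m m0 : MeasurableSpace Ω} {μ : Measure Ω} {F : ℝ → MeasurableSpace Ω} {L : ℝ → Ω → ℝ}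
  {E τ J : Ω → ℝ}

-- Off the null set of discontinuous paths `L` is a Carathéodory function of `(s, ω)`.
lemma measurable_apply_of_continuousOn (hm : ContainsNullSets μ m) {t : ℝ} (ht : 0 ≤ t)
    (hL : ∀ s ∈ Icc 0 t, Measurable[m] (L s)) (hcont : ∀ᵐ ω ∂μ, ContinuousOn (L · ω) (Icc 0 t))
    {S : Ω → ℝ} (hS : Measurable[m] S) (hSt : ∀ᵐ ω ∂μ, S ω ∈ Icc 0 t) :
    Measurable[m] (fun ω => L (S ω) ω) := by
  let C : Set Ω := {ω | ContinuousOn (L · ω) (Icc 0 t)}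
  have hC : MeasurableSet[m] C :=
    hm.measurableSet_of_ae_eq MeasurableSet.univ (eventuallyEq_univ.2 hcont)
  let u : ℝ → Ω → ℝ := fun s => C.indicator (L (projIcc 0 t ht s))
  have hu_cont : ∀ ω, Continuous (u · ω) := by
    intro ω
    by_cases hω : ω ∈ C
    · simpa only [u, indicator_of_mem hω, Function.comp_def] using
        hω.comp_continuous (continuous_subtype_val.comp continuous_projIcc) fun s =>
          (projIcc 0 t ht s).2
    · simpa only [u, indicator_of_notMem hω] using continuous_const
  have hu : ∀ s, Measurable[m] (u s) := fun s => (hL _ (projIcc 0 t ht s).2).indicator hC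
  refine hm.measurable_of_ae_eq (g := fun ω => u (S ω) ω)
    ((measurable_uncurry_of_continuous_of_measurable hu_cont hu).comp
      (hS.prodMk measurable_id)) ?_
  filter_upwards [hcont, hSt] with ω hω hSω
  simp only [u, indicator_of_mem (show ω ∈ C from hω), projIcc_of_mem ht hSω]

lemma measurable_compensatedJump (hF : IsFiltration m0 F) (hnull : ContainsNullSets μ (F 0))
    (hL : ∀ t, 0 ≤ t → Measurable[F t] (L t)) (hpath : ∀ᵐ ω ∂μ, IsHazardPath (L · ω))
    (hτ0 : ∀ᵐ ω ∂μ, 0 ≤ τ ω) (hJ0 : ∀ᵐ ω ∂μ, J ω ≠ 0) {t : ℝ} (ht : 0 ≤ t) :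
    Measurable[F t ⊔ natFilt (jumpProcess τ J) t] (compensatedJump μ L τ J t) := by
  have hm : ContainsNullSets μ (F t ⊔ natFilt (jumpProcess τ J) t) :=
    hnull.mono ((hF.1 0 t le_rfl ht).trans le_sup_left)
  have hmin : Measurable[F t ⊔ natFilt (jumpProcess τ J) t] (fun ω => min (τ ω) t) :=
    measurable_min_of_measurableSet_le hm hτ0 fun s hs =>
      measurableSet_le_of_measurable_jumpProcess hm hJ0 (measurable_jumpProcess_sup_natFilt hs)
  have hstopped := measurable_apply_of_continuousOn hm ht
    (fun s hs => (hL s hs.1).mono ((hF.1 s t hs.1 hs.2).trans le_sup_left) le_rfl)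
    (hpath.mono fun ω hω => hω.continuousOn.mono Icc_subset_Ici_self) hmin
    (hτ0.mono fun ω hω => ⟨le_min hω ht, min_le_right _ _⟩)
  exact (measurable_jumpProcess_sup_natFilt ⟨ht, le_rfl⟩).sub (hstopped.const_mul _)

lemma continuousWithinAt_compensatedJump {ω : Ω} (hL : ContinuousOn (L · ω) (Ici 0))
    (hτ0 : 0 ≤ τ ω) {s : ℝ} (hs : 0 ≤ s) :
    ContinuousWithinAt (compensatedJump μ L τ J · ω) (Ioi s) s := by
  have hstopped : ContinuousOn (fun t => L (min (τ ω) t) ω) (Ici 0) :=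
    hL.comp (continuous_const.min continuous_id).continuousOn fun t ht => le_min hτ0 ht
  exact (continuousWithinAt_jumpProcess τ J ω s).sub
    (((hstopped s hs).mono fun t ht => hs.trans (le_of_lt ht)).const_mul _)

-- The `max` only serves to have a hazard that is nonnegative everywhere and not just a.s.
lemma compensatedJump_ae_eq (hpath : ∀ᵐ ω ∂μ, IsHazardPath (L · ω))
    (hpass : ∀ᵐ ω ∂μ, IsFirstPassage (L · ω) (E ω) (τ ω)) {t : ℝ} (ht : 0 ≤ t) :
    compensatedJump μ L τ J t =ᵐ[μ] fun ω => {ω | E ω ≤ max (L t ω) 0}.indicator J ω -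
      (∫ x, J x ∂μ) * min (E ω) (max (L t ω) 0) := by
  filter_upwards [hpath, hpass, jumpProcess_ae_eq_indicator (J := J) hpass ht] with ω hL hT hjump
  rw [compensatedJump, hjump, hT.apply_min ht]
  simp only [indicator_apply, mem_ofPred_eq, max_eq_left (hL.nonneg ht)]

variable [IsProbabilityMeasure μ]

lemma integrable_compensatedJump (hE : IsExpOne μ E) (hL : ∀ t, 0 ≤ t → Measurable (L t))
    (hpath : ∀ᵐ ω ∂μ, IsHazardPath (L · ω))
    (hpass : ∀ᵐ ω ∂μ, IsFirstPassage (L · ω) (E ω) (τ ω)) (hJint : Integrable J μ) {t : ℝ}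
    (ht : 0 ≤ t) : Integrable (compensatedJump μ L τ J t) μ := by
  have hZ : Measurable fun ω => max (L t ω) 0 := (hL t ht).max measurable_const
  exact ((hJint.indicator (measurableSet_le hE.1 hZ)).sub
    ((hE.integrable_min hZ fun ω => le_max_right _ _).const_mul _)).congr
    (compensatedJump_ae_eq hpath hpass ht).symm

lemma setIntegral_compensatedJump_eq_zero (hE : IsExpOne μ E) (hm : m ≤ m0)
    (hEind : Indep (MeasurableSpace.comap E inferInstance) m μ) (hJ : Measurable J)
    (hJint : Integrable J μ)
    (hJind : Indep (MeasurableSpace.comap J inferInstance)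
      (m ⊔ MeasurableSpace.comap E inferInstance) μ)
    (hpath : ∀ᵐ ω ∂μ, IsHazardPath (L · ω))
    (hpass : ∀ᵐ ω ∂μ, IsFirstPassage (L · ω) (E ω) (τ ω)) {t : ℝ} (ht : 0 ≤ t)
    (hL : Measurable[m] (L t)) {B : Set Ω} (hB : MeasurableSet[m] B) :
    ∫ ω in B, compensatedJump μ L τ J t ω ∂μ = 0 := by
  rw [integral_congr_ae (ae_restrict_of_ae (compensatedJump_ae_eq hpath hpass ht))]
  exact hE.setIntegral_compensated_mark_eq_zero hm hEind hJ hJint hJind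
    (hL.max measurable_const) (fun ω => le_max_right _ _) hB

lemma isMartingale_compensatedJump (hF : IsFiltration m0 F) (hnull : ContainsNullSets μ (F 0))
    (hL : ∀ t, 0 ≤ t → Measurable[F t] (L t)) (hpath : ∀ᵐ ω ∂μ, IsHazardPath (L · ω))
    (hpass : ∀ᵐ ω ∂μ, IsFirstPassage (L · ω) (E ω) (τ ω)) (hE : IsExpOne μ E)
    (hEind : Indep (MeasurableSpace.comap E inferInstance) (Finfty F) μ) (hJ : Measurable J)
    (hJint : Integrable J μ) (hJ0 : ∀ᵐ ω ∂μ, J ω ≠ 0)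
    (hJind : Indep (MeasurableSpace.comap J inferInstance)
      (Finfty F ⊔ MeasurableSpace.comap E inferInstance) μ) :
    IsMartingale μ (fun t => F t ⊔ natFilt (jumpProcess τ J) t) (compensatedJump μ L τ J) := by
  have hint : ∀ t, 0 ≤ t → Integrable (compensatedJump μ L τ J t) μ := fun t ht =>
    integrable_compensatedJump hE (fun t ht => (hL t ht).mono (hF.2 t) le_rfl) hpath hpass hJint ht
  have hG := isFiltration_sup_natFilt_jumpProcess hF hnull hL hpass hE.1 hJ
  refine isMartingale_of_setIntegral_increment_eq_zero hG hint (fun t ht =>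
    measurable_compensatedJump hF hnull hL hpath (hpass.mono fun ω hω => hω.nonneg) hJ0 ht)
    fun s t hs hst A hA => ?_
  have ht : 0 ≤ t := hs.trans hst
  have hcentered : ∀ r, 0 ≤ r → ∀ B, MeasurableSet[F s] B →
      ∫ ω in B, compensatedJump μ L τ J r ω ∂μ = 0 := fun r hr B hB =>
    setIntegral_compensatedJump_eq_zero hE hF.Finfty_le hEind hJ hJint hJind hpath hpass hr
      ((hL r hr).mono (le_Finfty hr) le_rfl) (le_Finfty hs B hB)
  have htrace : MeasurableSpace.comap ((↑) : {ω | s < τ ω} → Ω)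
      (F s ⊔ natFilt (jumpProcess τ J) s) = MeasurableSpace.comap (↑) (F s) :=
    comap_val_sup_natFilt_eq (F s) (y := fun _ => 0) fun r hr ω hω =>
      if_neg (hr.2.trans_lt hω).not_ge
  refine setIntegral_eq_zero_of_comap_val_le (hF.2 s) (hG.2 s) htrace.le (fun ω hω => ?_)
    (fun B hB => ?_) hA
  · have hτs : τ ω ≤ s := not_lt.1 hω
    simp only [compensatedJump, jumpProcess, hτs, hτs.trans hst, min_eq_left, sub_self]
  · rw [integral_sub (hint t ht).integrableOn (hint s hs).integrableOn,
      hcentered t ht B hB, hcentered s hs B hB, sub_self]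

lemma IsMartingale.sup_natFilt_jumpProcess {M : ℝ → Ω → ℝ} (hM : IsMartingale μ F M)
    (hF : IsFiltration m0 F) (hnull : ContainsNullSets μ (F 0))
    (hL : ∀ t, 0 ≤ t → Measurable[F t] (L t))
    (hpass : ∀ᵐ ω ∂μ, IsFirstPassage (L · ω) (E ω) (τ ω)) (hE : Measurable E)
    (hEind : Indep (MeasurableSpace.comap E inferInstance) (Finfty F) μ) (hJ : Measurable J)
    (hJind : Indep (MeasurableSpace.comap J inferInstance)
      (Finfty F ⊔ MeasurableSpace.comap E inferInstance) μ) :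
    IsMartingale μ (fun t => F t ⊔ natFilt (jumpProcess τ J) t) M := by
  have hFE := hF.sup_const hE.comap_le
  have hFinfty : Finfty (fun t => F t ⊔ MeasurableSpace.comap E inferInstance) ≤
      Finfty F ⊔ MeasurableSpace.comap E inferInstance :=
    iSup₂_le fun t ht => sup_le_sup_right (le_Finfty ht) _
  have hME := hM.sup_of_indep hF hE.comap_le hEind.symm
  have hMEJ := hME.sup_of_indep hFE hJ.comap_le (indep_of_indep_of_le_right hJind hFinfty).symm
  exact hMEJ.of_le (hFE.sup_const hJ.comap_le)
    (fun t ht => sup_natFilt_jumpProcess_le hF hnull hL hpass ht)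
    fun t ht => (hM.2.1 t ht).mono le_sup_left le_rfl

end CompensatedJump

theorem cox_one_jump_random_size_general {m0 : MeasurableSpace Ω} {μ : Measure Ω}
    [IsProbabilityMeasure μ] {F : ℝ → MeasurableSpace Ω} (hF : IsFiltration m0 F)
    (hnull : ContainsNullSets μ (F 0)) {L : ℝ → Ω → ℝ} (hL : ∀ t, 0 ≤ t → Measurable[F t] (L t))
    (hpath : ∀ᵐ ω ∂μ, IsHazardPath (L · ω)) {E : Ω → ℝ} (hE : IsExpOne μ E)
    (hEind : Indep (MeasurableSpace.comap E inferInstance) (Finfty F) μ) {τ : Ω → ℝ}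
    (hτ : ∀ᵐ ω ∂μ, τ ω = sInf {t : ℝ | 0 < t ∧ E ω ≤ L t ω}) {J : Ω → ℝ} (hJ : Measurable J)
    (hJint : Integrable J μ) (hJ0 : ∀ᵐ ω ∂μ, J ω ≠ 0)
    (hJind : Indep (MeasurableSpace.comap J inferInstance)
      (Finfty F ⊔ MeasurableSpace.comap E inferInstance) μ) :
    IsMartingale μ (rcReg fun t => F t ⊔ natFilt (jumpProcess τ J) t) (compensatedJump μ L τ J) ∧
      Immersed μ F (rcReg fun t => F t ⊔ natFilt (jumpProcess τ J) t) := by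
  have hpass : ∀ᵐ ω ∂μ, IsFirstPassage (L · ω) (E ω) (τ ω) := by
    filter_upwards [hpath, hE.ae_pos, hτ] with ω hLω hEω hτω
    exact hτω ▸ hLω.isFirstPassage_sInf hEω
  have hG := isFiltration_sup_natFilt_jumpProcess hF hnull hL hpass hE.1 hJ
  refine ⟨?_, fun t ht => le_sup_left.trans (hG.le_rcReg ht), fun M hMrc hM => ?_⟩
  · refine (isMartingale_compensatedJump hF hnull hL hpath hpass hE hEind hJ hJint hJ0
      hJind).to_rcReg hG fun s hs => ?_
    filter_upwards [hpath, hpass] with ω hLω hTω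
    exact continuousWithinAt_compensatedJump hLω.continuousOn hTω.nonneg hs
  · exact (hM.sup_natFilt_jumpProcess hF hnull hL hpass hE.1 hEind hJ hJind).to_rcReg hG
      fun s hs => ae_of_all _ fun ω => (hMrc ω s hs).mono Ioi_subset_Ici_self

/-- The Cox construction with one jump time and random jump size `J`:
`(J·1_{τ ≤ t} − E[J]·Λ_{τ ∧ t})_t` is a `G̃`-martingale and `F` is immersed in `G̃`. -/
theorem cox_one_jump_random_size {m0 : MeasurableSpace Ω} (μ : Measure Ω)
    [IsProbabilityMeasure μ]
    (F : ℝ → MeasurableSpace Ω) (hUC : UsualConditions μ F)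
    (lam : ℝ → Ω → ℝ) (hprog : ProgMeas F lam)
    (hnonneg : ∀ s ω, 0 ≤ lam s ω)
    (hfin : ∀ᵐ ω ∂μ, ∀ t : ℝ, IntegrableOn (fun s => lam s ω) (Set.Ioc 0 t) volume)
    (hinf : ∀ᵐ ω ∂μ, Tendsto (fun t => ∫ s in Set.Ioc 0 t, lam s ω) atTop atTop)
    (E : Ω → ℝ) (hE : IsExpOne μ E)
    (hEindep : Indep (MeasurableSpace.comap E inferInstance) (Finfty F) μ)
    (τ : Ω → ℝ)
    (hτ : ∀ ω, τ ω = sInf {t : ℝ | 0 < t ∧ E ω ≤ ∫ s in Set.Ioc 0 t, lam s ω})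
    (J : Ω → ℝ) (hJmeas : Measurable J) (hJint : Integrable J μ)
    (hJnonvanish : μ {ω | J ω ≠ 0} = 1)
    (hJindep : Indep (MeasurableSpace.comap J inferInstance)
      (Finfty F ⊔ MeasurableSpace.comap E inferInstance) μ)
    (Atil : ℝ → MeasurableSpace Ω)
    (hAtil : Atil = natFilt (fun s ω => if τ ω ≤ s then J ω else 0))
    (Gtil : ℝ → MeasurableSpace Ω)
    (hGtil : ∀ t : ℝ, Gtil t = rcReg (fun u => F u ⊔ Atil u) t) :
    IsMartingale μ Gtil (fun t ω =>
      (if τ ω ≤ t then J ω else 0) -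
        (∫ x, J x ∂μ) * ∫ s in Set.Ioc 0 (min (τ ω) t), lam s ω) ∧
    Immersed μ F Gtil := by
  subst hAtil
  obtain rfl : Gtil = rcReg _ := funext hGtil
  exact cox_one_jump_random_size_general hUC.1 hUC.2.2
    (fun _ => hprog.measurable_cumulativeIntensity)
    (by filter_upwards [hfin, hinf] with ω using isHazardPath_cumulativeIntensity (hnonneg · ω))
    hE hEindep (ae_of_all _ hτ) hJmeas hJint
    ((mem_ae_iff_prob_eq_one (hJmeas (measurableSet_singleton 0).compl)).2 hJnonvanish) hJindep

end InvMarkovJump
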